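/- Let D be a nonempty closed convex subset of ℝ^d with nonempty interior, let g : ℝ^d → ℝ be continuous and m-strongly convex with m > 0, let σ > 0, and for n ≥ 1 set f_n(x) = g(x) + (n/2)·dist(x,D)², Z^n = ∫_{ℝ^d} exp(−(2/σ²)f_n) dx, and let π^n be the probability measure with Lebesgue density exp(−(2/σ²)f_n)/Z^n. Let π be the truncated Gibbs measure with Lebesgue density exp(−(2/σ²)g(x))·1_D(x)/Z_D, where Z_D = ∫_D exp(−(2/σ²)g) dx > 0. Then for every bounded continuous function φ : ℝ^d → ℝ, ∫ φ dπ^n → ∫ φ dπ as n → ∞; that is, π^n converges weakly to π. -/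

import Mathlib

open MeasureTheory Metric Filter

/-!
Both measures in the theorem are exponentially tilted: `π^n` is `volume.tilted (f - t_n p)` with
`f = -(2/σ²) g`, `p = dist(·, D)²` and `t_n = n/σ²`, and `π` is `(volume.restrict D).tilted f`. As
`t → ∞` the weight `exp (f - t p)` decreases to `exp f` on `D = {p = 0}` and to `0` off `D`, so
dominated convergence, with dominating function `exp f`, gives convergence of the unnormalized
integrals and of the normalizing constants; the limiting constant is positive because `D` has
positive volume. The function `exp f` is integrable because `g - (m/2)‖·‖²` is convex and so has an
affine minorant, which bounds `exp f` by a Gaussian.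
-/

section StrongConvexity

variable {V : Type*} [NormedAddCommGroup V] [InnerProductSpace ℝ V] {g : V → ℝ} {m : ℝ}

theorem exists_quadratic_le_of_strongConvexOn (hg : StrongConvexOn Set.univ m g)
    (hglsc : LowerSemicontinuous g) :
    ∃ (l : V →L[ℝ] ℝ) (b : ℝ), ∀ x, m / 2 * ‖x‖ ^ 2 + l x + b ≤ g x := by
  have hlsc : LowerSemicontinuous fun x => g x - m / 2 * ‖x‖ ^ 2 := by
    simpa only [sub_eq_add_neg] using hglsc.add
      (Continuous.lowerSemicontinuous (f := fun x : V => -(m / 2 * ‖x‖ ^ 2)) (by fun_prop))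
  obtain ⟨l, b, hlb, -⟩ := (strongConvexOn_iff_convex.1 hg).exists_affine_le_of_lt (𝕜 := ℝ)
    (Set.mem_univ 0) (sub_one_lt _) isClosed_univ (hlsc.lowerSemicontinuousOn _)
  refine ⟨l, b, fun x => ?_⟩
  have hx : l x + b ≤ g x - m / 2 * ‖x‖ ^ 2 := hlb ⟨x, Set.mem_univ x⟩
  linarith

variable [FiniteDimensional ℝ V]

theorem continuous_of_strongConvexOn (hg : StrongConvexOn Set.univ m g) : Continuous g := by
  have hconv : Continuous fun x => g x - m / 2 * ‖x‖ ^ 2 :=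
    (strongConvexOn_iff_convex.1 hg).locallyLipschitz.continuous
  have hsq : Continuous fun x : V => m / 2 * ‖x‖ ^ 2 := by fun_prop
  exact (hconv.add hsq).congr fun x => sub_add_cancel (g x) _

variable [MeasurableSpace V] [BorelSpace V]

theorem integrable_exp_neg_mul_sq_norm_add_clm {b : ℝ} (hb : 0 < b) (l : V →L[ℝ] ℝ) :
    Integrable fun x => Real.exp (-b * ‖x‖ ^ 2 + l x) := by
  have hgauss := (GaussianFourier.integrable_cexp_neg_mul_sq_norm_add (b := (b : ℂ))
    (by simpa using hb) 1 ((InnerProductSpace.toDual ℝ V).symm l)).norm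
  refine hgauss.congr (.of_forall fun x => ?_)
  simp only [Complex.norm_exp, one_mul, InnerProductSpace.toDual_symm_apply]
  norm_cast

theorem integrable_exp_neg_mul_of_strongConvexOn (hm : 0 < m)
    (hg : StrongConvexOn Set.univ m g) {c : ℝ} (hc : 0 < c) :
    Integrable fun x => Real.exp (-c * g x) := by
  have hgc : Continuous g := continuous_of_strongConvexOn hg
  obtain ⟨l, b, hlb⟩ := exists_quadratic_le_of_strongConvexOn hg hgc.lowerSemicontinuous
  have hgauss := integrable_exp_neg_mul_sq_norm_add_clm (b := c * (m / 2)) (by positivity) (-c • l)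
  refine (hgauss.mul_const (Real.exp (-c * b))).mono' (by fun_prop) (.of_forall fun x => ?_)
  calc ‖Real.exp (-c * g x)‖ = Real.exp (-c * g x) := Real.norm_of_nonneg (Real.exp_nonneg _)
    _ ≤ Real.exp (-c * (m / 2 * ‖x‖ ^ 2 + l x + b)) :=
      Real.exp_le_exp.2 (mul_le_mul_of_nonpos_left (hlb x) (neg_nonpos.2 hc.le))
    _ = Real.exp (-(c * (m / 2)) * ‖x‖ ^ 2 + (-c • l) x) * Real.exp (-c * b) := by
      rw [← Real.exp_add]
      congr 1
      simp only [smul_apply, smul_eq_mul]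
      ring

end StrongConvexity

section Penalization

variable {X : Type*} {f p : X → ℝ}

theorem tendsto_exp_sub_mul_indicator (hp : 0 ≤ p) (x : X) :
    Tendsto (fun t : ℝ => Real.exp (f x - t * p x)) atTop
      (nhds ({y | p y = 0}.indicator (fun y => Real.exp (f y)) x)) := by
  by_cases hx : p x = 0
  · simp [hx]
  · have hpos : 0 < p x := (hp x).lt_of_ne' hx
    rw [Set.indicator_of_notMem (by simpa using hx)]
    have hpenalty : Tendsto (fun t : ℝ => t * p x) atTop atTop := tendsto_id.atTop_mul_const hpos
    exact Real.tendsto_exp_atBot.comp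
      (tendsto_const_nhds.add_atBot (tendsto_neg_atTop_atBot.comp hpenalty))

variable {E : Type*} [NormedAddCommGroup E] [NormedSpace ℝ E] {φ : X → E} {M : ℝ}
  [MeasurableSpace X] {μ : Measure X}

theorem tendsto_integral_exp_sub_mul_smul (hf : Integrable (fun x => Real.exp (f x)) μ)
    (hp : 0 ≤ p) (hpm : AEMeasurable p μ) (hφ : AEStronglyMeasurable φ μ)
    (hM : ∀ᵐ x ∂μ, ‖φ x‖ ≤ M) :
    Tendsto (fun t : ℝ => ∫ x, Real.exp (f x - t * p x) • φ x ∂μ) atTop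
      (nhds (∫ x in {x | p x = 0}, Real.exp (f x) • φ x ∂μ)) := by
  have hfm : AEMeasurable f μ := Real.aemeasurable_of_aemeasurable_exp hf.aemeasurable
  have hzero : NullMeasurableSet {x | p x = 0} μ :=
    hpm.nullMeasurableSet_preimage (measurableSet_singleton 0)
  rw [← integral_indicator₀ hzero]
  refine tendsto_integral_filter_of_dominated_convergence (fun x => Real.exp (f x) * M)
    (.of_forall fun t => ?_) ?_ (hf.mul_const M) (.of_forall fun x => ?_)
  · have hweight : AEMeasurable (fun x => Real.exp (f x - t * p x)) μ := by fun_prop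
    exact hweight.aestronglyMeasurable.smul hφ
  · filter_upwards [eventually_ge_atTop 0] with t ht
    filter_upwards [hM] with x hx
    rw [norm_smul, Real.norm_of_nonneg (Real.exp_nonneg _)]
    gcongr
    exact sub_le_self _ (mul_nonneg ht (hp x))
  · rw [Set.indicator_smul_apply_left]
    exact (tendsto_exp_sub_mul_indicator hp x).smul_const (φ x)

theorem integral_tilted_eq_inv_smul (μ : Measure X) (f : X → ℝ) (φ : X → E) :
    ∫ x, φ x ∂(μ.tilted f) = (∫ x, Real.exp (f x) ∂μ)⁻¹ • ∫ x, Real.exp (f x) • φ x ∂μ := by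
  simp only [integral_tilted, div_eq_inv_mul, mul_smul, integral_smul]

theorem tendsto_integral_tilted_sub_mul (hf : Integrable (fun x => Real.exp (f x)) μ)
    (hp : 0 ≤ p) (hpm : AEMeasurable p μ) (hμp : μ {x | p x = 0} ≠ 0)
    (hφ : AEStronglyMeasurable φ μ) (hM : ∀ᵐ x ∂μ, ‖φ x‖ ≤ M) :
    Tendsto (fun t : ℝ => ∫ x, φ x ∂(μ.tilted fun x => f x - t * p x)) atTop
      (nhds (∫ x, φ x ∂((μ.restrict {x | p x = 0}).tilted f))) := by
  have : NeZero (μ.restrict {x | p x = 0}) := ⟨by simpa using hμp⟩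
  have hZ_pos : 0 < ∫ x in {x | p x = 0}, Real.exp (f x) ∂μ := integral_exp_pos hf.integrableOn
  have hZ_lim : Tendsto (fun t : ℝ => ∫ x, Real.exp (f x - t * p x) ∂μ) atTop
      (nhds (∫ x in {x | p x = 0}, Real.exp (f x) ∂μ)) := by
    simpa only [smul_eq_mul, mul_one] using tendsto_integral_exp_sub_mul_smul hf hp hpm
      (aestronglyMeasurable_const (b := (1 : ℝ))) (.of_forall fun _ => norm_one.le)
  simp only [integral_tilted_eq_inv_smul]
  exact (hZ_lim.inv₀ hZ_pos.ne').smul (tendsto_integral_exp_sub_mul_smul hf hp hpm hφ hM)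

theorem tilted_restrict_eq_withDensity_indicator {s : Set X} (hs : MeasurableSet s) :
    (μ.restrict s).tilted f = μ.withDensity fun x => ENNReal.ofReal
      (s.indicator (fun y => Real.exp (f y)) x / ∫ y in s, Real.exp (f y) ∂μ) := by
  rw [Measure.tilted, ← withDensity_indicator hs]
  congr with x
  by_cases hx : x ∈ s <;> simp [hx]

variable [PseudoMetricSpace X] [OpensMeasurableSpace X] {D : Set X} {g : X → ℝ} {c : ℝ}

theorem penalized_gibbs_weak_convergence_general (hDclosed : IsClosed D) (hμD : μ D ≠ 0)
    (hc : 0 < c) (hg : Integrable (fun x => Real.exp (-c * g x)) μ) {φ : X → ℝ}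
    (hφ : AEStronglyMeasurable φ μ) (hM : ∀ᵐ x ∂μ, |φ x| ≤ M) :
    Tendsto
      (fun n : ℕ => ∫ x, φ x ∂(μ.tilted fun x => -c * (g x + (n : ℝ) / 2 * infDist x D ^ 2)))
      atTop (nhds (∫ x, φ x ∂((μ.restrict D).tilted fun x => -c * g x))) := by
  have hzero : {x | infDist x D ^ 2 = 0} = D := by
    ext x
    simp [hDclosed.mem_iff_infDist_zero (nonempty_of_measure_ne_zero hμD)]
  have hstrength : Tendsto (fun n : ℕ => c * ((n : ℝ) / 2)) atTop atTop :=
    (tendsto_natCast_atTop_atTop.atTop_div_const two_pos).const_mul_atTop hc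
  have hlim := (tendsto_integral_tilted_sub_mul hg (fun x => sq_nonneg (infDist x D))
    (measurable_infDist.pow_const 2).aemeasurable (by rwa [hzero]) hφ hM).comp hstrength
  rw [hzero] at hlim
  refine hlim.congr fun n => ?_
  simp only [Function.comp_apply, mul_add, neg_mul, mul_assoc, sub_eq_add_neg]

end Penalization

/-- Weak convergence of the penalized Gibbs measures `π^n` to the truncated
Gibbs measure `π` on `D`: for every bounded continuous `φ : ℝ^d → ℝ`,
`∫ φ dπ^n → ∫ φ dπ`. -/
theorem penalized_gibbs_weak_convergence
    {d : ℕ} (D : Set (EuclideanSpace ℝ (Fin d)))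
    (hDne : D.Nonempty) (hDclosed : IsClosed D) (hDconv : Convex ℝ D)
    (hDint : (interior D).Nonempty)
    (g : EuclideanSpace ℝ (Fin d) → ℝ) (hgc : Continuous g)
    (m : ℝ) (hm : 0 < m) (hgsc : StrongConvexOn Set.univ m g)
    (σ : ℝ) (hσ : 0 < σ)
    (fn : ℕ → EuclideanSpace ℝ (Fin d) → ℝ)
    (hfn : ∀ n x, fn n x = g x + (n : ℝ) / 2 * (infDist x D) ^ 2)
    (Z : ℕ → ℝ)
    (hZ : ∀ n, Z n = ∫ x : EuclideanSpace ℝ (Fin d), Real.exp (-(2 / σ ^ 2) * fn n x))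
    (π' : ℕ → Measure (EuclideanSpace ℝ (Fin d)))
    (hπ' : ∀ n, π' n = volume.withDensity
      (fun x => ENNReal.ofReal (Real.exp (-(2 / σ ^ 2) * fn n x) / Z n)))
    (ZD : ℝ) (hZD : ZD = ∫ x in D, Real.exp (-(2 / σ ^ 2) * g x))
    (π : Measure (EuclideanSpace ℝ (Fin d)))
    (hπ : π = volume.withDensity
      (fun x => ENNReal.ofReal
        (D.indicator (fun y => Real.exp (-(2 / σ ^ 2) * g y)) x / ZD))) :
    ∀ φ : EuclideanSpace ℝ (Fin d) → ℝ, Continuous φ → (∃ M : ℝ, ∀ x, |φ x| ≤ M) →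
      Tendsto (fun n : ℕ => ∫ x, φ x ∂(π' n)) atTop (nhds (∫ x, φ x ∂π)) := by
  rintro φ hφ ⟨M, hM⟩
  have hc : 0 < 2 / σ ^ 2 := by positivity
  simp only [hπ', hZ, hfn, hπ, hZD]
  rw [← tilted_restrict_eq_withDensity_indicator hDclosed.measurableSet]
  exact penalized_gibbs_weak_convergence_general hDclosed
    (Measure.measure_pos_of_nonempty_interior volume hDint).ne' hc
    (integrable_exp_neg_mul_of_strongConvexOn hm hgsc hc) hφ.aestronglyMeasurable (.of_forall hM)
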